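/- A special case of chain factorization for the two-loop graph: let G consist of two vertices v, v' joined by three internally disjoint directed paths p_0, p_1, p_2 from v to v', where all edges of p_1 and p_2 are oriented forward (E_1 and E_2) while p_0 may contain backward edges (E_{0̄} is its set of backward edges, E_0 its forward edges). Then N(G) = (Σ_{e∈E_{0̄}} X_e)(Σ_{e∈E_{1̄}} X_e) + (Σ_{e∈E_{0̄}} X_e)(Σ_{e∈E_2} X_e) + (Σ_{e∈E_1} X_e)(Σ_{e∈E_2} X_e), where X_e = x_{α(e)} - x_{ω(e)}; in particular if E_{0̄} = ∅ (i.e. p_0 is a chain), N(G) = (Σ_{e∈E_1} X_e)(Σ_{e∈E_2} X_e) factorizes. -/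

import Mathlib

open scoped BigOperators

/-- The field of rational functions in variables indexed by `V` over `ℚ`. -/
abbrev K (V : Type) : Type := FractionRing (MvPolynomial V ℚ)

/-- The variable `x_v` seen inside the field of rational functions. -/
noncomputable def xv {V : Type} (v : V) : K V :=
  algebraMap (MvPolynomial V ℚ) (K V) (MvPolynomial.X v)

/-- `ψ_w = 1 / ∏ (x_{w_i} - x_{w_{i+1}})` for a word `w`. -/
noncomputable def psi {V : Type} (w : List V) : K V :=
  (((w.zip w.tail).map fun p => xv p.1 - xv p.2).prod)⁻¹

/-- The word (list of vertices) associated to an enumeration `σ` of the vertex set `W`. -/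
def wordOf {V : Type} (W : Finset V) (σ : Fin W.card ≃ W) : List V :=
  (List.finRange W.card).map fun i => ((σ i : W) : V)

/-- `σ` enumerates `W` in an order compatible with all edges of `E`:
the origin of every edge appears before its end. -/
def IsExt {V : Type} (W : Finset V) (E : Finset (V × V)) (σ : Fin W.card ≃ W) : Prop :=
  ∀ e ∈ E, ∃ i j : Fin W.card, i < j ∧ ((σ i : W) : V) = e.1 ∧ ((σ j : W) : V) = e.2

instance {V : Type} [DecidableEq V] (W : Finset V) (E : Finset (V × V)) (σ : Fin W.card ≃ W) :
    Decidable (IsExt W E σ) := by unfold IsExt; exact inferInstance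

/-- `Ψ(G) = Σ_{w ∈ L(G)} ψ_w`, the sum over linear extensions of the graph with
vertex set `W` and edge set `E`. -/
noncomputable def PsiG {V : Type} [DecidableEq V] (W : Finset V) (E : Finset (V × V)) : K V :=
  ∑ σ : Fin W.card ≃ W, if IsExt W E σ then psi (wordOf W σ) else 0

/-- `N(G) = Ψ(G) ⬝ ∏_{(a,b) ∈ E} (x_a - x_b)`. -/
noncomputable def NG {V : Type} [DecidableEq V] (W : Finset V) (E : Finset (V × V)) : K V :=
  PsiG W E * ∏ e ∈ E, (xv e.1 - xv e.2)

/-- `φ(G)`, the formal sum of the linear extensions of `G` in the free abelian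
group on words. -/
noncomputable def phiG {V : Type} [DecidableEq V] (W : Finset V) (E : Finset (V × V)) :
    List V →₀ ℤ :=
  ∑ σ : Fin W.card ≃ W, if IsExt W E σ then Finsupp.single (wordOf W σ) 1 else 0

/-- The graph has no directed circuit. -/
def Acyclic {V : Type} (E : Finset (V × V)) : Prop :=
  ∀ v : V, ¬ Relation.TransGen (fun a b => (a, b) ∈ E) v v

/-- The underlying undirected simple graph of the directed graph with edge set `E`. -/
def undirected {V : Type} (E : Finset (V × V)) : SimpleGraph V :=
  SimpleGraph.fromRel fun a b => (a, b) ∈ E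

/-- The cyclically-consecutive pairs of a list of vertices. -/
def cyclePairs {V : Type} [DecidableEq V] (vs : List V) : Finset (V × V) :=
  Finset.image (fun i : Fin vs.length => (vs.get i, vs.get (finRotate _ i))) Finset.univ

/-- `vs` is (the vertex list of) a cycle of the graph `E`, whose set of forward
edges (edges traversed in their graph orientation) is `HE`. -/
def IsCycle {V : Type} [DecidableEq V] (E : Finset (V × V)) (vs : List V)
    (HE : Finset (V × V)) : Prop :=
  2 ≤ vs.length ∧ vs.Nodup ∧ HE ⊆ cyclePairs vs ∧ HE ⊆ E ∧
    ∀ p ∈ cyclePairs vs, p ∉ HE → (p.2, p.1) ∈ E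

/-- The set of consecutive pairs of a list (the steps of a path). -/
def pathPairs {V : Type} [DecidableEq V] (l : List V) : Finset (V × V) :=
  (l.zip l.tail).toFinset

/-- The edge set of a path `l` whose set of forward steps is `F`: the forward steps
are edges of the graph as they are, the other steps are traversed backwards. -/
def orientEdges {V : Type} [DecidableEq V] (l : List V) (F : Finset (V × V)) :
    Finset (V × V) :=
  F ∪ (pathPairs l \ F).image Prod.swap

/-!
Each ordering of the vertices puts `a` before `b` or `b` before `a`, so
`N(G + ab) = N(G + ba) + (x_a - x_b) N(G)`: reversing an edge costs `X_e` times the numerator of the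
graph without it. Attaching a pendant edge does not change `N`, an isolated vertex kills `Ψ`, and
`N` vanishes as soon as there is a directed circuit.

Reverse the edges of one path `p` of the theta graph one after the other. Deleting an edge of `p`
leaves pendant paths on the rest `G'` of the graph, so that each reversal costs `X_e N(G')`. Making
`p_0` a chain from `v` to `v'` thus costs `(∑_{E_{0̄}} X_e) N(p_1 ∪ p_2)`, making then `p_1` a chain
from `v'` to `v` costs `(∑_{E_1} X_e) N(p_0 ∪ p_2)`, and the remaining graph has a directed circuit.
The same two moves give the numerator of the cycle `p ∪ q`, namely the sum of `X_e` over the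
backward edges of `p` and the forward edges of `q`.
-/

section Words

lemma perm_of_mem_permutations'Aux {α : Type*} {a : α} {l u : List α}
    (hu : u ∈ l.permutations'Aux a) : u.Perm (a :: l) :=
  List.mem_permutations'.1 (List.mem_flatMap.2 ⟨l, List.mem_permutations'.2 (.refl l), hu⟩)

lemma idxOf_lt_idxOf_iff_of_mem_permutations'Aux {α : Type*} [DecidableEq α] {a p q : α}
    {l u : List α} (hp : p ≠ a) (hq : q ≠ a) (hu : u ∈ l.permutations'Aux a) :
    u.idxOf p < u.idxOf q ↔ l.idxOf p < l.idxOf q := by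
  induction l generalizing u with
  | nil =>
    obtain rfl : u = [a] := by simpa [List.permutations'Aux] using hu
    simp [hp.symm, hq.symm]
  | cons b l ih =>
    simp only [List.permutations'Aux, List.mem_cons, List.mem_map] at hu
    obtain rfl | ⟨w, hw, rfl⟩ := hu
    · rw [List.idxOf_cons_ne _ hp.symm, List.idxOf_cons_ne _ hq.symm, Nat.succ_lt_succ_iff]
    · have := ih hw
      grind

lemma sum_map_permutations'Aux_append_cons {α M : Type*} [AddCommMonoid M] (f : List α → M)
    (a p : α) (s t : List α) :
    (((s ++ p :: t).permutations'Aux a).map f).sum =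
      ((s.permutations'Aux a).map fun u => f (u ++ p :: t)).sum +
        ((t.permutations'Aux a).map fun u => f (s ++ p :: u)).sum := by
  induction s generalizing f with
  | nil => simp [List.permutations'Aux, Function.comp_def]
  | cons b s ih =>
    simp only [List.cons_append, List.permutations'Aux, List.map_cons, List.sum_cons,
      List.map_map, Function.comp_def, ih fun u => f (b :: u), add_assoc]

variable {V : Type}

lemma xv_sub_xv_ne_zero {a b : V} (h : a ≠ b) : xv a - xv b ≠ 0 :=
  sub_ne_zero.2 fun hx =>
    h (MvPolynomial.X_injective (IsFractionRing.injective (MvPolynomial V ℚ) (K V) hx))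

lemma psi_singleton (a : V) : psi [a] = 1 := by simp [psi]

lemma psi_cons_cons (a b : V) (l : List V) :
    psi (a :: b :: l) = (xv a - xv b)⁻¹ * psi (b :: l) := by
  simp [psi, mul_comm]

lemma psi_append_cons (s : List V) (p : V) (t : List V) :
    psi (s ++ p :: t) = psi (s ++ [p]) * psi (p :: t) := by
  induction s with
  | nil => simp [psi_singleton]
  | cons a s ih =>
    cases s with
    | nil => simp [psi_cons_cons, psi_singleton]
    | cons b s => simpa only [List.cons_append, psi_cons_cons, mul_assoc] using congrArg _ ih

lemma sum_psi_cons_permutations'Aux {a b : V} {t : List V} (h : (a :: b :: t).Nodup) :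
    ((t.permutations'Aux a).map fun u => psi (b :: u)).sum = psi (b :: t) * (xv b - xv a)⁻¹ := by
  induction t generalizing b with
  | nil => simp [List.permutations'Aux, psi_cons_cons, psi_singleton]
  | cons c t ih =>
    have hact : (a :: c :: t).Nodup := h.sublist (by simp)
    have hab : a ≠ b := by grind
    have hac : a ≠ c := by grind
    have hbc : b ≠ c := by grind
    have hba := xv_sub_xv_ne_zero hab.symm
    have hca := xv_sub_xv_ne_zero hac.symm
    replace hac := xv_sub_xv_ne_zero hac
    replace hbc := xv_sub_xv_ne_zero hbc
    simp only [List.permutations'Aux, List.map_cons, List.map_map, List.sum_cons,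
      Function.comp_def, psi_cons_cons, List.sum_map_mul_left, ih hact]
    field_simp
    ring

lemma sum_psi_permutations'Aux_eq_zero {a : V} {l : List V} (hl : l ≠ []) (h : (a :: l).Nodup) :
    ((l.permutations'Aux a).map psi).sum = 0 := by
  obtain ⟨b, t, rfl⟩ := List.exists_cons_of_ne_nil hl
  simp only [List.permutations'Aux, List.map_cons, List.map_map, List.sum_cons,
    Function.comp_def, sum_psi_cons_permutations'Aux h, psi_cons_cons]
  rw [← neg_sub (xv a) (xv b), inv_neg]
  ring

lemma sum_psi_permutations'Aux_of_idxOf_lt [DecidableEq V] {a p : V} {l : List V}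
    (h : (a :: l).Nodup) (hp : p ∈ l) :
    ((l.permutations'Aux a).map fun u => if u.idxOf p < u.idxOf a then psi u else 0).sum =
      psi l * (xv p - xv a)⁻¹ := by
  obtain ⟨s, t, rfl⟩ := List.append_of_mem hp
  have hbefore : ∀ u ∈ s.permutations'Aux a,
      ¬ (u ++ p :: t).idxOf p < (u ++ p :: t).idxOf a := fun u hu => by
    have hu := perm_of_mem_permutations'Aux hu
    have hau : a ∈ u := hu.mem_iff.2 (by simp)
    have hpu : p ∉ u := fun hpu => by have := hu.mem_iff.1 hpu; grind
    rw [List.idxOf_append_of_mem hau, List.idxOf_append_of_notMem hpu]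
    have := List.idxOf_lt_length_of_mem hau
    omega
  have hafter (u : List V) :
      (if (s ++ p :: u).idxOf p < (s ++ p :: u).idxOf a then psi (s ++ p :: u) else 0) =
        psi (s ++ [p]) * psi (p :: u) := by
    have hps : p ∉ s := by grind
    have has : a ∉ s := by grind
    have hpa : p ≠ a := by grind
    rw [if_pos, psi_append_cons]
    simp [List.idxOf_append_of_notMem, hps, has, List.idxOf_cons_ne _ hpa]
  rw [sum_map_permutations'Aux_append_cons,
    List.map_congr_left fun u hu => if_neg (hbefore u hu), psi_append_cons s p t, mul_assoc,
    ← sum_psi_cons_permutations'Aux (h.sublist (by simp)), ← List.sum_map_mul_left]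
  simp [hafter]

end Words

section LinearExtensions

variable {V : Type}

/-- The words listing each vertex of `W` exactly once. -/
noncomputable def orderings (W : Finset V) : Multiset (List V) :=
  W.toList.permutations'

lemma mem_orderings {W : Finset V} {l : List V} : l ∈ orderings W ↔ l.Perm W.toList := by
  simp [orderings]

lemma cons_nodup_of_perm_toList {W : Finset V} {a : V} {l : List V} (ha : a ∉ W)
    (hl : l.Perm W.toList) : (a :: l).Nodup :=
  List.nodup_cons.2 ⟨by simpa [hl.mem_iff] using ha, hl.nodup_iff.2 W.nodup_toList⟩

lemma nodup_orderings (W : Finset V) : (orderings W).Nodup :=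
  (List.permutations_perm_permutations' _).nodup_iff.1 (List.nodup_permutations _ W.nodup_toList)

lemma wordOf_perm_toList (W : Finset V) (σ : Fin W.card ≃ W) : (wordOf W σ).Perm W.toList := by
  refine (List.perm_ext_iff_of_nodup ?_ W.nodup_toList).2 fun a => ?_
  · exact (List.nodup_finRange _).map (Subtype.val_injective.comp σ.injective)
  · simp only [wordOf, List.mem_map, List.mem_finRange, true_and, Finset.mem_toList]
    exact ⟨fun ⟨i, hi⟩ => hi ▸ (σ i).2, fun ha => ⟨σ.symm ⟨a, ha⟩, by simp⟩⟩

lemma wordOf_injective (W : Finset V) : Function.Injective (wordOf W) := fun _ _ h =>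
  Equiv.ext fun i => Subtype.ext (List.map_inj_left.1 h i (List.mem_finRange i))

lemma exists_wordOf_eq {W : Finset V} {l : List V} (hl : l.Perm W.toList) :
    ∃ σ : Fin W.card ≃ W, wordOf W σ = l := by
  classical
  have hnodup : l.Nodup := hl.nodup_iff.2 W.nodup_toList
  have hcard : W.card = l.length := by simp [hl.length_eq]
  refine ⟨(finCongr hcard).trans ((hnodup.getEquiv l).trans
    (Equiv.subtypeEquivRight fun a => by simp [hl.mem_iff])), ?_⟩
  exact List.ext_getElem (by simp [wordOf, hcard]) fun i _ _ => by
    simp [wordOf, List.Nodup.getEquiv]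

variable [DecidableEq V]

lemma orderings_insert {a : V} {W : Finset V} (ha : a ∉ W) :
    orderings (insert a W) =
      (orderings W).bind fun l => (l.permutations'Aux a : Multiset (List V)) := by
  simpa [orderings, List.permutations'] using (Finset.toList_insert ha).permutations'

/-- Each edge of `E` points forward in the word `l`. Vertices missing from `l` count as placed at
its end, so this is the notion of linear extension only if `l` contains the endpoints of `E`. -/
def Respects (E : Finset (V × V)) (l : List V) : Prop :=
  ∀ e ∈ E, l.idxOf e.1 < l.idxOf e.2

instance (E : Finset (V × V)) (l : List V) : Decidable (Respects E l) :=
  inferInstanceAs (Decidable (∀ e ∈ E, l.idxOf e.1 < l.idxOf e.2))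

lemma respects_insert {e : V × V} {E : Finset (V × V)} {l : List V} :
    Respects (insert e E) l ↔ l.idxOf e.1 < l.idxOf e.2 ∧ Respects E l :=
  Finset.forall_mem_insert ..

lemma respects_iff_of_mem_permutations'Aux {W : Finset V} {E : Finset (V × V)} {a : V}
    {l u : List V} (hE : E ⊆ W ×ˢ W) (ha : a ∉ W) (hu : u ∈ l.permutations'Aux a) :
    Respects E u ↔ Respects E l := by
  refine forall₂_congr fun e he => ?_
  have he := Finset.mem_product.1 (hE he)
  exact idxOf_lt_idxOf_iff_of_mem_permutations'Aux (ne_of_mem_of_not_mem he.1 ha)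
    (ne_of_mem_of_not_mem he.2 ha) hu

lemma idxOf_wordOf (W : Finset V) (σ : Fin W.card ≃ W) (i : Fin W.card) :
    (wordOf W σ).idxOf (σ i : V) = i := by
  have hn : (wordOf W σ).Nodup := (wordOf_perm_toList W σ).nodup_iff.2 W.nodup_toList
  simpa [wordOf] using hn.idxOf_getElem i (by simp [wordOf])

lemma isExt_iff_respects {W : Finset V} {E : Finset (V × V)} (hE : E ⊆ W ×ˢ W)
    (σ : Fin W.card ≃ W) : IsExt W E σ ↔ Respects E (wordOf W σ) := by
  refine forall₂_congr fun e he => ⟨?_, fun h => ?_⟩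
  · rintro ⟨i, j, hij, hi, hj⟩
    rwa [← hi, ← hj, idxOf_wordOf, idxOf_wordOf]
  · have he := Finset.mem_product.1 (hE he)
    refine ⟨σ.symm ⟨e.1, he.1⟩, σ.symm ⟨e.2, he.2⟩, ?_, by simp, by simp⟩
    rw [Fin.lt_def, ← idxOf_wordOf W σ, ← idxOf_wordOf W σ]
    simpa using h

lemma PsiG_eq_sum_orderings {W : Finset V} {E : Finset (V × V)} (hE : E ⊆ W ×ˢ W) :
    PsiG W E = ((orderings W).map fun l => if Respects E l then psi l else 0).sum := by
  refine Finset.sum_bij (t := ⟨orderings W, nodup_orderings W⟩) (fun σ _ => wordOf W σ)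
    (fun σ _ => mem_orderings.2 (wordOf_perm_toList W σ)) (fun _ _ _ _ h => wordOf_injective W h)
    (fun l hl => ?_) (fun σ _ => by simp only [isExt_iff_respects hE])
  obtain ⟨σ, hσ⟩ := exists_wordOf_eq (mem_orderings.1 hl)
  exact ⟨σ, Finset.mem_univ σ, hσ⟩

lemma PsiG_eq_zero_of_forall_not_respects {W : Finset V} {E : Finset (V × V)} (hE : E ⊆ W ×ˢ W)
    (h : ∀ l, ¬ Respects E l) : PsiG W E = 0 := by
  simp [PsiG_eq_sum_orderings hE, h]

lemma PsiG_singleton_empty (a : V) : PsiG {a} ∅ = 1 := by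
  simp [PsiG_eq_sum_orderings, orderings, Respects, psi_singleton]

lemma PsiG_insert_add_PsiG_insert_swap {W : Finset V} {E : Finset (V × V)} {a b : V}
    (ha : a ∈ W) (hb : b ∈ W) (hab : a ≠ b) (hE : E ⊆ W ×ˢ W) :
    PsiG W (insert (a, b) E) + PsiG W (insert (b, a) E) = PsiG W E := by
  rw [PsiG_eq_sum_orderings (Finset.insert_subset (by simp [ha, hb]) hE),
    PsiG_eq_sum_orderings (Finset.insert_subset (by simp [ha, hb]) hE),
    PsiG_eq_sum_orderings hE, ← Multiset.sum_map_add]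
  refine congrArg _ (Multiset.map_congr rfl fun l hl => ?_)
  have hal : a ∈ l := (mem_orderings.1 hl).mem_iff.2 (by simpa using ha)
  have hne : l.idxOf a ≠ l.idxOf b := fun h => hab ((List.idxOf_inj hal).1 h)
  obtain hlt | hlt := hne.lt_or_gt <;> simp [respects_insert, hlt, hlt.not_gt]

lemma PsiG_insert_eq_sum {W : Finset V} {E : Finset (V × V)} {a : V} (ha : a ∉ W)
    (hE : E ⊆ insert a W ×ˢ insert a W) :
    PsiG (insert a W) E = ((orderings W).map fun l =>
      ((l.permutations'Aux a).map fun u => if Respects E u then psi u else 0).sum).sum := by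
  simp [PsiG_eq_sum_orderings hE, orderings_insert ha, Multiset.map_bind, Multiset.sum_bind]

lemma PsiG_insert_of_isolated {W : Finset V} {E : Finset (V × V)} {a : V}
    (hW : W.Nonempty) (ha : a ∉ W) (hE : E ⊆ W ×ˢ W) : PsiG (insert a W) E = 0 := by
  rw [PsiG_insert_eq_sum ha (hE.trans (by gcongr <;> simp))]
  refine Multiset.sum_eq_zero fun x hx => ?_
  obtain ⟨l, hl, rfl⟩ := Multiset.mem_map.1 hx
  rw [mem_orderings] at hl
  rw [List.map_congr_left fun u hu =>
    if_congr (respects_iff_of_mem_permutations'Aux hE ha hu) rfl rfl]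
  by_cases hr : Respects E l
  · simpa only [hr, if_true] using sum_psi_permutations'Aux_eq_zero
      (by rintro rfl; simp_all) (cons_nodup_of_perm_toList ha hl)
  · simp [hr]

lemma PsiG_insert_leaf {W : Finset V} {E : Finset (V × V)} {p a : V}
    (hp : p ∈ W) (ha : a ∉ W) (hE : E ⊆ W ×ˢ W) :
    PsiG (insert a W) (insert (p, a) E) = PsiG W E * (xv p - xv a)⁻¹ := by
  rw [PsiG_insert_eq_sum ha, PsiG_eq_sum_orderings hE, ← Multiset.sum_map_mul_right]
  · refine congrArg _ (Multiset.map_congr rfl fun l hl => ?_)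
    rw [mem_orderings] at hl
    rw [List.map_congr_left fun u hu => if_congr (respects_insert.trans
      (and_congr_right' (respects_iff_of_mem_permutations'Aux hE ha hu))) rfl rfl]
    by_cases hr : Respects E l
    · simpa only [hr, and_true, if_true] using sum_psi_permutations'Aux_of_idxOf_lt
        (cons_nodup_of_perm_toList ha hl) (hl.mem_iff.2 (Finset.mem_toList.2 hp))
    · simp [hr]
  · exact Finset.insert_subset (by simp [hp]) (hE.trans (by gcongr <;> simp))

end LinearExtensions

section Numerator

variable {V : Type} [DecidableEq V]

/-- The numerator `N` of a directed multigraph. With parallel edges allowed, reversing an edge whose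
reversal is already present needs no special treatment. -/
noncomputable def numerator (W : Finset V) (E : Multiset (V × V)) : K V :=
  PsiG W E.toFinset * (E.map fun e => xv e.1 - xv e.2).prod

lemma numerator_val (W : Finset V) (E : Finset (V × V)) : numerator W E.val = NG W E := by
  rw [numerator, NG, Finset.val_toFinset, Finset.prod_eq_multiset_prod]

lemma numerator_singleton_zero (a : V) : numerator {a} 0 = 1 := by
  simp [numerator, PsiG_singleton_empty]

variable {W : Finset V} {E : Multiset (V × V)}

lemma numerator_eq_zero_of_forall_not_respects (hE : E.toFinset ⊆ W ×ˢ W)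
    (h : ∀ l, ¬ Respects E.toFinset l) : numerator W E = 0 := by
  rw [numerator, PsiG_eq_zero_of_forall_not_respects hE h, zero_mul]

lemma numerator_insert_of_isolated {a : V} (hW : W.Nonempty) (ha : a ∉ W)
    (hE : E.toFinset ⊆ W ×ˢ W) : numerator (insert a W) E = 0 := by
  rw [numerator, PsiG_insert_of_isolated hW ha hE, zero_mul]

lemma numerator_cons_eq_numerator_cons_swap_add {a b : V} (ha : a ∈ W) (hb : b ∈ W) (hab : a ≠ b)
    (hE : E.toFinset ⊆ W ×ˢ W) :
    numerator W ((a, b) ::ₘ E) =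
      numerator W ((b, a) ::ₘ E) + (xv a - xv b) * numerator W E := by
  simp only [numerator, Multiset.toFinset_cons, Multiset.map_cons, Multiset.prod_cons,
    ← PsiG_insert_add_PsiG_insert_swap ha hb hab hE]
  ring

lemma numerator_cons_leaf {p a : V} {e : V × V} (he : e = (p, a) ∨ e = (a, p)) (hp : p ∈ W)
    (ha : a ∉ W) (hE : E.toFinset ⊆ W ×ˢ W) : numerator (insert a W) (e ::ₘ E) = numerator W E := by
  have hpa : p ≠ a := ne_of_mem_of_not_mem hp ha
  have hforward : numerator (insert a W) ((p, a) ::ₘ E) = numerator W E := by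
    have hx := xv_sub_xv_ne_zero hpa
    simp only [numerator, Multiset.toFinset_cons, Multiset.map_cons, Multiset.prod_cons,
      PsiG_insert_leaf hp ha hE]
    field_simp
  obtain rfl | rfl := he
  · exact hforward
  · rw [numerator_cons_eq_numerator_cons_swap_add (by simp) (by simp [hp]) hpa.symm
        (hE.trans (by gcongr <;> simp)), hforward, numerator_insert_of_isolated ⟨p, hp⟩ ha hE,
      mul_zero, add_zero]

end Numerator

section Strands

variable {V : Type*} {v v' : V} {m m' m₀ m₁ m₂ : List V}

/-- The path from `v` to `v'` whose list of interior vertices is `m`. -/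
abbrev strand (v : V) (m : List V) (v' : V) : List V := v :: (m ++ [v'])

lemma exists_eq_strand (hvv : v ≠ v') {l : List V} (h : l.head? = some v ∧ l.getLast? = some v') :
    ∃ m, l = strand v m v' := by
  obtain ⟨t, rfl⟩ := List.head?_eq_some_iff.1 h.1
  obtain ⟨s, hs⟩ := List.getLast?_eq_some_iff.1 h.2
  obtain _ | ⟨b, m⟩ := s
  · simp_all
  · exact ⟨m, by simp_all⟩

lemma disjoint_interior (hnd : (strand v m v').Nodup)
    (hint : ∀ u, u ∈ strand v m v' → u ∈ strand v m' v' → u = v ∨ u = v') : m.Disjoint m' := by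
  intro u hu hu'
  have huv := hint u (by simp [hu]) (by simp [hu'])
  grind

lemma nodup_ends_append_interiors (hvv : v ≠ v') (hnd₀ : (strand v m₀ v').Nodup)
    (hnd₁ : (strand v m₁ v').Nodup) (hnd₂ : (strand v m₂ v').Nodup)
    (hint₀₁ : ∀ u, u ∈ strand v m₀ v' → u ∈ strand v m₁ v' → u = v ∨ u = v')
    (hint₀₂ : ∀ u, u ∈ strand v m₀ v' → u ∈ strand v m₂ v' → u = v ∨ u = v')
    (hint₁₂ : ∀ u, u ∈ strand v m₁ v' → u ∈ strand v m₂ v' → u = v ∨ u = v') :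
    (v :: v' :: (m₀ ++ m₁ ++ m₂)).Nodup := by
  have h₀₁ := disjoint_interior hnd₀ hint₀₁
  have h₀₂ := disjoint_interior hnd₀ hint₀₂
  have h₁₂ := disjoint_interior hnd₁ hint₁₂
  simp_all [List.nodup_append', eq_comm]

end Strands

section Paths

variable {V : Type} [DecidableEq V] {F : Finset (V × V)} {W : Finset V} {E : Multiset (V × V)}
  {v v' : V} {m : List V}

lemma pathPairs_cons_cons (a b : V) (l : List V) :
    pathPairs (a :: b :: l) = insert (a, b) (pathPairs (b :: l)) := by
  simp [pathPairs]

lemma mem_of_mem_pathPairs {l : List V} {p : V × V} (hp : p ∈ pathPairs l) : p.1 ∈ l ∧ p.2 ∈ l := by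
  have hp := List.of_mem_zip (a := p.1) (b := p.2) (List.mem_toFinset.1 hp)
  exact ⟨hp.1, List.mem_of_mem_tail hp.2⟩

lemma lt_of_forall_mem_pathPairs {α : Type*} [Preorder α] {r : V → α}
    (h : ∀ p ∈ pathPairs (strand v m v'), r p.1 < r p.2) : r v < r v' := by
  induction m generalizing v with
  | nil => exact h (v, v') (by simp [pathPairs])
  | cons b m ih =>
    simp only [strand, List.cons_append, pathPairs_cons_cons, Finset.forall_mem_insert] at h
    exact h.1.trans (ih h.2)

lemma idxOf_snd_of_mem_pathPairs {l : List V} (hl : l.Nodup) {p : V × V} (hp : p ∈ pathPairs l) :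
    l.idxOf p.2 = l.idxOf p.1 + 1 := by
  induction l with
  | nil => simp [pathPairs] at hp
  | cons a l ih =>
    obtain _ | ⟨b, l⟩ := l
    · simp [pathPairs] at hp
    · obtain rfl | hp := Finset.mem_insert.1 (pathPairs_cons_cons a b l ▸ hp)
      · grind
      · have := ih hl.of_cons hp
        have := mem_of_mem_pathPairs hp
        grind

lemma pathPairs_val {l : List V} (hl : l.Nodup) : (pathPairs l).val = (l.zip l.tail : List _) := by
  have hzip : (l.zip l.tail).Nodup := by
    refine List.Nodup.of_map Prod.snd ?_
    rw [List.map_snd_zip (by simp)]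
    exact hl.tail
  rw [pathPairs, List.toFinset_val, hzip.dedup]

/-- The edge of an oriented path at the step `p`, where `F` is the set of forward steps. -/
def stepEdge (F : Finset (V × V)) (p : V × V) : V × V := if p ∈ F then p else p.swap

lemma stepEdge_eq_or_eq_swap (F : Finset (V × V)) (p : V × V) :
    stepEdge F p = p ∨ stepEdge F p = p.swap :=
  ite_eq_or_eq ..

lemma stepEdge_mem_product {p : V × V} : stepEdge F p ∈ W ×ˢ W ↔ p ∈ W ×ˢ W := by
  obtain h | h := stepEdge_eq_or_eq_swap F p <;> simp [h, and_comm]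

lemma stepEdge_injOn_pathPairs {l : List V} (hl : l.Nodup) (F : Finset (V × V)) :
    Set.InjOn (stepEdge F) (pathPairs l) := by
  have hswap {p q : V × V} (hp : p ∈ pathPairs l) (hq : q ∈ pathPairs l) : p ≠ q.swap := by
    rintro rfl
    have hforward := idxOf_snd_of_mem_pathPairs hl hq
    have hbackward := idxOf_snd_of_mem_pathPairs hl hp
    rw [Prod.fst_swap, Prod.snd_swap] at hbackward
    omega
  intro p hp q hq h
  obtain hp' | hp' := stepEdge_eq_or_eq_swap F p <;>
    obtain hq' | hq' := stepEdge_eq_or_eq_swap F q <;> rw [hp', hq'] at h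
  · exact h
  · exact absurd h (hswap hp hq)
  · exact absurd h.symm (hswap hq hp)
  · exact Prod.swap_injective h

/-- The edges of the path `l` with set `F` of forward steps, with multiplicity; the multiset version
of `orientEdges`. -/
def pathEdges (F : Finset (V × V)) (l : List V) : Multiset (V × V) :=
  ((l.zip l.tail).map (stepEdge F) : List (V × V))

lemma pathEdges_singleton (a : V) : pathEdges F [a] = 0 := rfl

lemma pathEdges_cons_cons (a b : V) (l : List V) :
    pathEdges F (a :: b :: l) = stepEdge F (a, b) ::ₘ pathEdges F (b :: l) := rfl

lemma stepEdge_mem_pathEdges {l : List V} {p : V × V} (hp : p ∈ pathPairs l) :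
    stepEdge F p ∈ pathEdges F l :=
  List.mem_map_of_mem (List.mem_toFinset.1 hp)

lemma pathEdges_toFinset_subset {l : List V} (hl : l.toFinset ⊆ W) :
    (pathEdges F l).toFinset ⊆ W ×ˢ W := by
  intro e he
  obtain ⟨p, hp, rfl⟩ := List.mem_map.1 (Multiset.mem_coe.1 (Multiset.mem_toFinset.1 he))
  have hp := List.of_mem_zip (a := p.1) (b := p.2) hp
  exact stepEdge_mem_product.2 (Finset.mem_product.2 ⟨hl (by simpa using hp.1),
    hl (by simpa using List.mem_of_mem_tail hp.2)⟩)

lemma pathEdges_add_toFinset_subset {l : List V} (hl : l.toFinset ⊆ W)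
    (hE : E.toFinset ⊆ W ×ˢ W) : (pathEdges F l + E).toFinset ⊆ W ×ˢ W := by
  rw [Multiset.toFinset_add]
  exact Finset.union_subset (pathEdges_toFinset_subset hl) hE

lemma orientEdges_val {l : List V} (hl : l.Nodup) {F : Finset (V × V)} (hF : F ⊆ pathPairs l) :
    (orientEdges l F).val = pathEdges F l := by
  have himage : orientEdges l F = (pathPairs l).image (stepEdge F) := by
    have hforward : F.image (stepEdge F) = F :=
      (Finset.image_congr fun p hp => if_pos hp).trans Finset.image_id
    have hbackward : (pathPairs l \ F).image (stepEdge F) = (pathPairs l \ F).image Prod.swap :=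
      Finset.image_congr fun p hp => if_neg (Finset.mem_sdiff.1 hp).2
    rw [orientEdges, ← hbackward]
    nth_rw 1 [← hforward]
    rw [← Finset.image_union, Finset.union_sdiff_of_subset hF]
  rw [himage, Finset.image_val_of_injOn (stepEdge_injOn_pathPairs hl F), pathPairs_val hl,
    Multiset.map_coe, pathEdges]

/-- The sum of `X_e = x_{α(e)} - x_{ω(e)}` over the forward edges of the path `l`. Intersecting with
the steps of `l` lets one set `F` serve for all parts of a path. -/
noncomputable def forwardSum (F : Finset (V × V)) (l : List V) : K V :=
  ∑ e ∈ pathPairs l ∩ F, (xv e.1 - xv e.2)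

/-- The sum of `X_e = x_{α(e)} - x_{ω(e)}` over the backward edges of the path `l`. -/
noncomputable def backwardSum (F : Finset (V × V)) (l : List V) : K V :=
  ∑ e ∈ (pathPairs l \ F).image Prod.swap, (xv e.1 - xv e.2)

lemma forwardSum_singleton (a : V) : forwardSum F [a] = 0 := by simp [forwardSum, pathPairs]

lemma forwardSum_cons_cons {a b : V} {l : List V} (h : (a :: b :: l).Nodup) :
    forwardSum F (a :: b :: l) =
      (if (a, b) ∈ F then xv a - xv b else 0) + forwardSum F (b :: l) := by
  have hnotMem : (a, b) ∉ pathPairs (b :: l) := fun hmem =>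
    (List.nodup_cons.1 h).1 (mem_of_mem_pathPairs hmem).1
  rw [forwardSum, forwardSum, pathPairs_cons_cons, ← Finset.sum_ite_mem, ← Finset.sum_ite_mem,
    Finset.sum_insert hnotMem]

lemma backwardSum_eq_sub (l : List V) :
    backwardSum F l = forwardSum F l - forwardSum (pathPairs l) l := by
  rw [backwardSum, forwardSum, forwardSum, Finset.inter_self,
    ← Finset.sum_inter_add_sum_sdiff (pathPairs l) F, Finset.sum_image Prod.swap_injective.injOn]
  simp

lemma backwardSum_pathPairs (l : List V) : backwardSum (pathPairs l) l = 0 := by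
  rw [backwardSum_eq_sub, sub_self]

end Paths

section Ears

variable {V : Type} [DecidableEq V] {F : Finset (V × V)} {W : Finset V} {E : Multiset (V × V)}
  {v v' : V} {m : List V}

lemma numerator_pathEdges_append_singleton {w : V} (hw : w ∈ W) (hm : m.Nodup)
    (hmW : Disjoint m.toFinset W) (hE : E.toFinset ⊆ W ×ˢ W) :
    numerator (m.toFinset ∪ W) (pathEdges F (m ++ [w]) + E) = numerator W E := by
  induction m with
  | nil => simp [pathEdges_singleton]
  | cons a m ih =>
    rw [List.toFinset_cons, Finset.disjoint_insert_left] at hmW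
    rw [List.nodup_cons] at hm
    obtain ⟨b, l, hl⟩ := List.exists_cons_of_ne_nil (show m ++ [w] ≠ [] by simp)
    have hlW : (b :: l).toFinset ⊆ m.toFinset ∪ W := by
      rw [← hl]
      grind [List.mem_toFinset]
    rw [List.toFinset_cons, Finset.insert_union, List.cons_append, hl, pathEdges_cons_cons,
      Multiset.cons_add, numerator_cons_leaf (stepEdge_eq_or_eq_swap F (a, b)).symm (hlW (by simp))
        (by simp [hm.1, hmW.1]), ← hl, ih hm.2 hmW.2]
    exact pathEdges_add_toFinset_subset hlW (hE.trans (by gcongr <;> simp))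

lemma numerator_pathEdges {l : List V} (hl : l.Nodup) (hne : l ≠ []) :
    numerator l.toFinset (pathEdges F l) = 1 := by
  obtain ⟨m, w, rfl⟩ := (List.eq_nil_or_concat' l).resolve_left hne
  obtain ⟨hm, -, hmw⟩ := List.nodup_append.1 hl
  simpa [numerator_singleton_zero] using
    numerator_pathEdges_append_singleton (F := F) (E := 0) (Finset.mem_singleton_self w) hm
      (by simpa using fun h => hmw w h w (by simp) rfl) (by simp)

/-- `m` lists the interior vertices of a path from `v` to `v'` whose ends lie in `W` and whose
interior avoids `W`: an ear that can be attached to a graph on `W`. -/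
structure IsEar (W : Finset V) (v : V) (m : List V) (v' : V) : Prop where
  source_mem : v ∈ W
  target_mem : v' ∈ W
  ne : v ≠ v'
  nodup : m.Nodup
  disjoint : Disjoint m.toFinset W

lemma IsEar.tail {b : V} (h : IsEar W v (b :: m) v') : IsEar (insert b W) b m v' := by
  obtain ⟨-, htarget, -, hnodup, hdisj⟩ := h
  rw [List.toFinset_cons, Finset.disjoint_insert_left] at hdisj
  rw [List.nodup_cons] at hnodup
  exact ⟨by simp, by simp [htarget], (ne_of_mem_of_not_mem htarget hdisj.1).symm, hnodup.2,
    Finset.disjoint_insert_right.2 ⟨by simpa using hnodup.1, hdisj.2⟩⟩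

lemma IsEar.strand_toFinset_subset (h : IsEar W v m v') :
    (strand v m v').toFinset ⊆ m.toFinset ∪ W := by
  have := h.source_mem
  have := h.target_mem
  grind [List.mem_toFinset]

lemma IsEar.strand_nodup (h : IsEar W v m v') : (strand v m v').Nodup := by
  obtain ⟨hsource, htarget, hne, hnodup, hdisj⟩ := h
  have hv : v ∉ m := by simpa using Finset.disjoint_right.1 hdisj hsource
  have hv' : v' ∉ m := by simpa using Finset.disjoint_right.1 hdisj htarget
  grind

lemma numerator_cons_stepEdge {a b : V} (ha : a ∈ W) (hb : b ∈ W) (hab : a ≠ b)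
    (hE : E.toFinset ⊆ W ×ˢ W) :
    numerator W (stepEdge F (a, b) ::ₘ E) = numerator W (stepEdge ∅ (a, b) ::ₘ E) +
      (if (a, b) ∈ F then xv a - xv b else 0) * numerator W E := by
  by_cases hF : (a, b) ∈ F
  · simp [stepEdge, hF, numerator_cons_eq_numerator_cons_swap_add ha hb hab hE]
  · simp [stepEdge, hF]

lemma IsEar.numerator_eq_add_forwardSum_mul (h : IsEar W v m v') (hE : E.toFinset ⊆ W ×ˢ W) :
    numerator (m.toFinset ∪ W) (pathEdges F (strand v m v') + E) =
      numerator (m.toFinset ∪ W) (pathEdges ∅ (strand v m v') + E) +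
        forwardSum F (strand v m v') * numerator W E := by
  induction m generalizing v W E with
  | nil =>
    simpa [strand, pathEdges_cons_cons, pathEdges_singleton, forwardSum_cons_cons,
      forwardSum_singleton, h.ne] using
      numerator_cons_stepEdge h.source_mem h.target_mem h.ne hE
  | cons b m ih =>
    have hb : b ∉ W := Finset.disjoint_left.1 h.disjoint (by simp)
    have hvb : v ≠ b := ne_of_mem_of_not_mem h.source_mem hb
    have hW : m.toFinset ∪ insert b W = (b :: m).toFinset ∪ W := by simp
    have hfirst : (stepEdge F (v, b) ::ₘ E).toFinset ⊆ insert b W ×ˢ insert b W := by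
      rw [Multiset.toFinset_cons]
      exact Finset.insert_subset (stepEdge_mem_product.2 (by simp [h.source_mem]))
        (hE.trans (by gcongr <;> simp))
    have hrest : (pathEdges ∅ (strand b m v') + E).toFinset ⊆
        ((b :: m).toFinset ∪ W) ×ˢ ((b :: m).toFinset ∪ W) :=
      pathEdges_add_toFinset_subset (hW ▸ h.tail.strand_toFinset_subset)
        (hE.trans (by gcongr <;> exact Finset.subset_union_right))
    have hcut : numerator ((b :: m).toFinset ∪ W) (pathEdges ∅ (strand b m v') + E) =
        numerator W E :=
      numerator_pathEdges_append_singleton h.target_mem h.nodup h.disjoint hE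
    have htail := ih h.tail hfirst
    rw [hW, numerator_cons_leaf (stepEdge_eq_or_eq_swap F (v, b)) h.source_mem hb hE,
      Multiset.add_cons, Multiset.add_cons, numerator_cons_stepEdge (by simp [h.source_mem])
        (by simp) hvb hrest, hcut] at htail
    rw [add_assoc, ← add_mul, ← forwardSum_cons_cons (l := m ++ [v']) h.strand_nodup]
      at htail
    simpa only [strand, List.cons_append, pathEdges_cons_cons, Multiset.cons_add] using htail

lemma IsEar.numerator_eq_add_backwardSum_mul (h : IsEar W v m v') (hE : E.toFinset ⊆ W ×ˢ W) :
    numerator (m.toFinset ∪ W) (pathEdges F (strand v m v') + E) =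
      numerator (m.toFinset ∪ W) (pathEdges (pathPairs (strand v m v')) (strand v m v') + E) +
        backwardSum F (strand v m v') * numerator W E := by
  rw [h.numerator_eq_add_forwardSum_mul hE,
    h.numerator_eq_add_forwardSum_mul (F := pathPairs (strand v m v')) hE, backwardSum_eq_sub]
  ring

lemma numerator_pathEdges_add_reverse_add_eq_zero {m' : List V} (hm : (strand v m v').toFinset ⊆ W)
    (hm' : (strand v m' v').toFinset ⊆ W) (hE : E.toFinset ⊆ W ×ˢ W) :
    numerator W (pathEdges (pathPairs (strand v m v')) (strand v m v') +
      (pathEdges ∅ (strand v m' v') + E)) = 0 := by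
  refine numerator_eq_zero_of_forall_not_respects
    (pathEdges_add_toFinset_subset hm (pathEdges_add_toFinset_subset hm' hE)) fun l hl => ?_
  simp only [Respects, Multiset.mem_toFinset, Multiset.mem_add] at hl
  have hforward : l.idxOf v < l.idxOf v' :=
    lt_of_forall_mem_pathPairs (r := fun u => l.idxOf u) (m := m) fun p hp =>
      hl p (.inl (by simpa [stepEdge, hp] using
        stepEdge_mem_pathEdges (F := pathPairs (strand v m v')) hp))
  have hbackward : OrderDual.toDual (l.idxOf v) < OrderDual.toDual (l.idxOf v') :=
    lt_of_forall_mem_pathPairs (r := fun u => OrderDual.toDual (l.idxOf u)) (m := m') fun p hp =>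
      hl p.swap (.inr (.inl (stepEdge_mem_pathEdges (F := ∅) hp)))
  exact hforward.asymm hbackward

end Ears

section TwoLoops

variable {V : Type} [DecidableEq V] {v v' : V} {m m' m₀ m₁ m₂ : List V}

lemma isEar_strand (h : (v :: v' :: (m ++ m')).Nodup) :
    IsEar (strand v m' v').toFinset v m v' := by
  refine ⟨by simp, by simp, by grind, by grind, ?_⟩
  rw [List.disjoint_toFinset_iff_disjoint]
  grind [List.disjoint_left]

lemma isEar_union_strand (h : (v :: v' :: (m₀ ++ m₁ ++ m₂)).Nodup) :
    IsEar (m₁.toFinset ∪ (strand v m₂ v').toFinset) v m₀ v' := by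
  rw [← List.toFinset_append]
  refine ⟨by simp, by simp, by grind, by grind, ?_⟩
  rw [List.disjoint_toFinset_iff_disjoint]
  grind [List.disjoint_left]

lemma pathEdges_strand_add_toFinset_subset {F F' : Finset (V × V)} :
    (pathEdges F (strand v m v') + pathEdges F' (strand v m' v')).toFinset ⊆
      (m.toFinset ∪ (strand v m' v').toFinset) ×ˢ (m.toFinset ∪ (strand v m' v').toFinset) :=
  pathEdges_add_toFinset_subset (by grind [List.mem_toFinset])
    (pathEdges_toFinset_subset Finset.subset_union_right)

lemma numerator_two_strands (h : (v :: v' :: (m ++ m')).Nodup) (F F' : Finset (V × V)) :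
    numerator (m.toFinset ∪ (strand v m' v').toFinset)
        (pathEdges F (strand v m v') + pathEdges F' (strand v m' v')) =
      backwardSum F (strand v m v') + forwardSum F' (strand v m' v') := by
  set l := strand v m v'
  set l' := strand v m' v'
  have hear : IsEar l'.toFinset v m v' := isEar_strand h
  have hear' : IsEar l.toFinset v m' v' := isEar_strand (by grind)
  have hunion : m.toFinset ∪ l'.toFinset = m'.toFinset ∪ l.toFinset := by
    grind [List.mem_toFinset]
  have hflip : numerator (m.toFinset ∪ l'.toFinset) (pathEdges F l + pathEdges F' l') =
      numerator (m.toFinset ∪ l'.toFinset) (pathEdges (pathPairs l) l + pathEdges F' l') +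
        backwardSum F l := by
    rw [hear.numerator_eq_add_backwardSum_mul (pathEdges_toFinset_subset subset_rfl),
      numerator_pathEdges hear'.strand_nodup (by simp), mul_one]
  have hflip' : numerator (m.toFinset ∪ l'.toFinset) (pathEdges (pathPairs l) l + pathEdges F' l') =
      numerator (m.toFinset ∪ l'.toFinset) (pathEdges (pathPairs l) l + pathEdges ∅ l') +
        forwardSum F' l' := by
    rw [hunion, add_comm, hear'.numerator_eq_add_forwardSum_mul
        (pathEdges_toFinset_subset subset_rfl),
      numerator_pathEdges hear.strand_nodup (by simp), mul_one, add_comm (pathEdges ∅ l')]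
  have hcircuit :
      numerator (m.toFinset ∪ l'.toFinset) (pathEdges (pathPairs l) l + pathEdges ∅ l') = 0 := by
    simpa using numerator_pathEdges_add_reverse_add_eq_zero (E := 0) hear.strand_toFinset_subset
      (Finset.subset_union_right (s₁ := m.toFinset)) (by simp)
  rw [hflip, hflip', hcircuit, zero_add, add_comm]

lemma numerator_three_strands (h : (v :: v' :: (m₀ ++ m₁ ++ m₂)).Nodup)
    (F₀ F₁ F₂ : Finset (V × V)) :
    numerator (m₀.toFinset ∪ (m₁.toFinset ∪ (strand v m₂ v').toFinset))
        (pathEdges F₀ (strand v m₀ v') +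
          (pathEdges F₁ (strand v m₁ v') + pathEdges F₂ (strand v m₂ v'))) =
      backwardSum F₀ (strand v m₀ v') * backwardSum F₁ (strand v m₁ v') +
        backwardSum F₀ (strand v m₀ v') * forwardSum F₂ (strand v m₂ v') +
        forwardSum F₁ (strand v m₁ v') * forwardSum F₂ (strand v m₂ v') := by
  set l₀ := strand v m₀ v'
  set l₁ := strand v m₁ v'
  set l₂ := strand v m₂ v'
  set W := m₀.toFinset ∪ (m₁.toFinset ∪ l₂.toFinset)
  have hear₀ : IsEar (m₁.toFinset ∪ l₂.toFinset) v m₀ v' := isEar_union_strand h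
  have hear₁ : IsEar (m₀.toFinset ∪ l₂.toFinset) v m₁ v' := isEar_union_strand (by grind)
  have hunion : W = m₁.toFinset ∪ (m₀.toFinset ∪ l₂.toFinset) := Finset.union_left_comm ..
  have hflip₀ : numerator W (pathEdges F₀ l₀ + (pathEdges F₁ l₁ + pathEdges F₂ l₂)) =
      numerator W (pathEdges (pathPairs l₀) l₀ + (pathEdges F₁ l₁ + pathEdges F₂ l₂)) +
        backwardSum F₀ l₀ * (backwardSum F₁ l₁ + forwardSum F₂ l₂) := by
    rw [hear₀.numerator_eq_add_backwardSum_mul pathEdges_strand_add_toFinset_subset,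
      numerator_two_strands (by grind)]
  have hflip₁ :
      numerator W (pathEdges (pathPairs l₀) l₀ + (pathEdges F₁ l₁ + pathEdges F₂ l₂)) =
        numerator W (pathEdges (pathPairs l₀) l₀ + (pathEdges ∅ l₁ + pathEdges F₂ l₂)) +
          forwardSum F₁ l₁ * forwardSum F₂ l₂ := by
    rw [add_left_comm, hunion,
      hear₁.numerator_eq_add_forwardSum_mul pathEdges_strand_add_toFinset_subset,
      numerator_two_strands (by grind), backwardSum_pathPairs, zero_add, add_left_comm]
  have hcircuit :
      numerator W (pathEdges (pathPairs l₀) l₀ + (pathEdges ∅ l₁ + pathEdges F₂ l₂)) = 0 :=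
    numerator_pathEdges_add_reverse_add_eq_zero hear₀.strand_toFinset_subset
      (hunion ▸ hear₁.strand_toFinset_subset)
      (pathEdges_toFinset_subset (Finset.subset_union_right.trans Finset.subset_union_right))
  rw [hflip₀, hflip₁, hcircuit]
  ring

theorem NG_two_loops_general {W : Finset V} (hvv : v ≠ v') {l0 l1 l2 : List V}
    (h0 : l0.head? = some v ∧ l0.getLast? = some v')
    (h1 : l1.head? = some v ∧ l1.getLast? = some v')
    (h2 : l2.head? = some v ∧ l2.getLast? = some v')
    (hnd0 : l0.Nodup) (hnd1 : l1.Nodup) (hnd2 : l2.Nodup)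
    (hint01 : ∀ u, u ∈ l0 → u ∈ l1 → u = v ∨ u = v')
    (hint02 : ∀ u, u ∈ l0 → u ∈ l2 → u = v ∨ u = v')
    (hint12 : ∀ u, u ∈ l1 → u ∈ l2 → u = v ∨ u = v')
    (hW : ∀ u, u ∈ W ↔ u ∈ l0 ∨ u ∈ l1 ∨ u ∈ l2) {F0 F1 F2 : Finset (V × V)}
    (hF0 : F0 ⊆ pathPairs l0) (hF1 : F1 ⊆ pathPairs l1) (hF2 : F2 ⊆ pathPairs l2)
    (hdisj01 : Disjoint (orientEdges l0 F0) (orientEdges l1 F1))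
    (hdisj02 : Disjoint (orientEdges l0 F0) (orientEdges l2 F2))
    (hdisj12 : Disjoint (orientEdges l1 F1) (orientEdges l2 F2)) :
    NG W (orientEdges l0 F0 ∪ orientEdges l1 F1 ∪ orientEdges l2 F2) =
      (∑ e ∈ (pathPairs l0 \ F0).image Prod.swap, (xv e.1 - xv e.2)) *
          (∑ e ∈ (pathPairs l1 \ F1).image Prod.swap, (xv e.1 - xv e.2)) +
        (∑ e ∈ (pathPairs l0 \ F0).image Prod.swap, (xv e.1 - xv e.2)) *
          (∑ e ∈ F2, (xv e.1 - xv e.2)) +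
        (∑ e ∈ F1, (xv e.1 - xv e.2)) * (∑ e ∈ F2, (xv e.1 - xv e.2)) := by
  obtain ⟨m₀, rfl⟩ := exists_eq_strand hvv h0
  obtain ⟨m₁, rfl⟩ := exists_eq_strand hvv h1
  obtain ⟨m₂, rfl⟩ := exists_eq_strand hvv h2
  have hnodup : (v :: v' :: (m₀ ++ m₁ ++ m₂)).Nodup :=
    nodup_ends_append_interiors hvv hnd0 hnd1 hnd2 hint01 hint02 hint12
  have hverts : W = m₀.toFinset ∪ (m₁.toFinset ∪ (strand v m₂ v').toFinset) := by
    ext u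
    simp only [hW, strand, Finset.mem_union, List.mem_toFinset, List.mem_cons, List.mem_append,
      List.not_mem_nil, or_false]
    tauto
  have hedges : (orientEdges (strand v m₀ v') F0 ∪ orientEdges (strand v m₁ v') F1 ∪
      orientEdges (strand v m₂ v') F2).val = pathEdges F0 (strand v m₀ v') +
        (pathEdges F1 (strand v m₁ v') + pathEdges F2 (strand v m₂ v')) := by
    rw [Finset.union_assoc,
      ← Finset.disjUnion_eq_union _ _ (Finset.disjoint_union_right.2 ⟨hdisj01, hdisj02⟩),
      Finset.disjUnion_val, ← Finset.disjUnion_eq_union _ _ hdisj12, Finset.disjUnion_val,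
      orientEdges_val hnd0 hF0, orientEdges_val hnd1 hF1, orientEdges_val hnd2 hF2]
  rw [← numerator_val, hedges, hverts, numerator_three_strands hnodup,
    backwardSum, backwardSum, forwardSum, forwardSum,
    Finset.inter_eq_right.2 hF1, Finset.inter_eq_right.2 hF2]

end TwoLoops

/-- two-loop graph.  `G` consists of three internally disjoint paths
`l0, l1, l2` from `v` to `v'`; all steps of `l1` and `l2` are forward edges
(`F1 = pathPairs l1`, `F2 = pathPairs l2`, so `E_1 = F1`, `E_2 = F2` and `E_{1̄} = ∅`),
while `l0` may contain backward edges (`E_0 = F0`, `E_{0̄} = (pathPairs l0 \ F0).swap`).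
Then `N(G) = (Σ_{E_{0̄}} X_e)(Σ_{E_{1̄}} X_e) + (Σ_{E_{0̄}} X_e)(Σ_{E_2} X_e)
+ (Σ_{E_1} X_e)(Σ_{E_2} X_e)` where `X_e = x_{α(e)} - x_{ω(e)}`. -/
theorem NG_two_loops (V : Type) [Fintype V] [DecidableEq V]
    (v v' : V) (hvv : v ≠ v')
    (l0 l1 l2 : List V)
    (h0 : l0.head? = some v ∧ l0.getLast? = some v')
    (h1 : l1.head? = some v ∧ l1.getLast? = some v')
    (h2 : l2.head? = some v ∧ l2.getLast? = some v')
    (hlen0 : 2 ≤ l0.length) (hlen1 : 2 ≤ l1.length) (hlen2 : 2 ≤ l2.length)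
    (hnd0 : l0.Nodup) (hnd1 : l1.Nodup) (hnd2 : l2.Nodup)
    (hint01 : ∀ u : V, u ∈ l0 → u ∈ l1 → u = v ∨ u = v')
    (hint02 : ∀ u : V, u ∈ l0 → u ∈ l2 → u = v ∨ u = v')
    (hint12 : ∀ u : V, u ∈ l1 → u ∈ l2 → u = v ∨ u = v')
    (hcover : ∀ u : V, u ∈ l0 ∨ u ∈ l1 ∨ u ∈ l2)
    (F0 F1 F2 : Finset (V × V))
    (hF0 : F0 ⊆ pathPairs l0) (hF1 : F1 = pathPairs l1) (hF2 : F2 = pathPairs l2)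
    (E : Finset (V × V))
    (hE : E = orientEdges l0 F0 ∪ orientEdges l1 F1 ∪ orientEdges l2 F2)
    (hdisj01 : Disjoint (orientEdges l0 F0) (orientEdges l1 F1))
    (hdisj02 : Disjoint (orientEdges l0 F0) (orientEdges l2 F2))
    (hdisj12 : Disjoint (orientEdges l1 F1) (orientEdges l2 F2))
    (hacyc : Acyclic E) :
    NG (Finset.univ : Finset V) E =
      (∑ e ∈ (pathPairs l0 \ F0).image Prod.swap, (xv e.1 - xv e.2)) *
          (∑ e ∈ (pathPairs l1 \ F1).image Prod.swap, (xv e.1 - xv e.2)) +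
        (∑ e ∈ (pathPairs l0 \ F0).image Prod.swap, (xv e.1 - xv e.2)) *
          (∑ e ∈ F2, (xv e.1 - xv e.2)) +
        (∑ e ∈ F1, (xv e.1 - xv e.2)) * (∑ e ∈ F2, (xv e.1 - xv e.2)) := by
  subst hE hF1 hF2
  exact NG_two_loops_general hvv h0 h1 h2 hnd0 hnd1 hnd2 hint01 hint02 hint12
    (by simpa using hcover) hF0 subset_rfl subset_rfl hdisj01 hdisj02 hdisj12
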